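/- Define J₀(h) = I₀(h)/I₁(h) and J₂(h) = I₂(h)/I₁(h) for h ∈ (−1/4, 0). Then J₀''(h) ≠ 0 on (−1/4, 0), and the function w(h) = J₂''(h)/J₀''(h) satisfies the Riccati equation h·(4h+1)·w'(h) = −(35/4)·w(h)² + (2h+1)·w(h) − h on (−1/4, 0), w(h) → −1/7 as h → −1/4 from the right, and w'(h) > 0 and w''(h) > 0 for every h ∈ (−1/4, 0), i.e. w is strictly increasing and strictly convex. -/

import Mathlib

/-!
Put `r = √(1 + 4h)`. The substitution `x = √(1 + r cos θ)` turns the Abelian integrals into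
`AbI k h = (r² / √2) ∫₀^π (1 + r cos θ)^((k-1)/2) sin² θ dθ`, so that `J0` and `J2` are `2/π` times
the integrals `G p n h = ∫₀^π (1 + r cos θ)^p sinⁿ θ dθ` with `n = 2` and `p = ∓1/2`
(`J0_eq`, `J2_eq`). Differentiating under the integral sign and integrating by parts gives
`(G p n)' = 2 p (p - 1) / (n + 1) · G (p - 2) (n + 2)` (`hasDerivAt_G`), where the singular factor
`1 / r` has disappeared. Consequently `J0''` and `J2''` are explicit multiples of the positive
integrals `A = G (-9/2) 6` and `B = G (-7/2) 6`, and `w = -B / (7 A)` is negative. As all the `G p n`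
are continuous at `h = -1/4`, where they reduce to `∫₀^π sinⁿ`, so are `w`, `w'` and `w''`, with
values `-1/7`, `9/28` and `99/160`.

The Riccati equation follows from linear relations between the `G p n`: writing
`r cos θ = u - 1` with `u = 1 + r cos θ` in the `r`-derivative (`s_mul_G`), and
`r² sin² θ = (r² - 1) + 2u - u²` (`s_mul_G'`).

Differentiating the Riccati equation gives
`h(4h+1) w'' = (-35/2 w - 6h) w' + 2w - 1`. At a zero of `w'` the right side is `2w - 1 < 0` while
`h(4h+1) < 0`, so `w'' > 0` there. As `w'` starts positive at `-1/4`, it can never vanish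
(`pos_of_deriv_pos_at_zeros`). One more differentiation shows that at a zero of `w''`,
`h(4h+1) w''' = -35/2 w'² - 4 w' < 0`, and the same argument gives `w'' > 0`.
-/

open Set

/-- Lower endpoint of the oval projection: `x₋(h) = √(1 − √(1+4h))`. -/
noncomputable def xminus (h : ℝ) : ℝ := Real.sqrt (1 - Real.sqrt (1 + 4*h))

/-- Upper endpoint of the oval projection: `x₊(h) = √(1 + √(1+4h))`. -/
noncomputable def xplus (h : ℝ) : ℝ := Real.sqrt (1 + Real.sqrt (1 + 4*h))

/-- The Abelian integral `I_k(h) = 2∫_{x₋(h)}^{x₊(h)} x^k √(2h + x² − x⁴/2) dx`. -/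
noncomputable def AbI (k : ℕ) (h : ℝ) : ℝ :=
  2 * ∫ x in (xminus h)..(xplus h), x ^ k * Real.sqrt (2*h + x^2 - x^4/2)
/-- `J₀ = I₀/I₁`. -/
noncomputable def J0 (h : ℝ) : ℝ := AbI 0 h / AbI 1 h

/-- `J₂ = I₂/I₁`. -/
noncomputable def J2 (h : ℝ) : ℝ := AbI 2 h / AbI 1 h

/-- The ratio `w = J₂''/J₀''`. -/
noncomputable def wRatio (h : ℝ) : ℝ := iteratedDeriv 2 J2 h / iteratedDeriv 2 J0 h

/-! ### The trigonometric integrals and their derivatives -/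

/-- The integral `∫₀^π (1 + r cos θ)^p sinⁿ θ dθ`. -/
noncomputable def F (p : ℝ) (n : ℕ) (r : ℝ) : ℝ :=
  ∫ θ in (0:ℝ)..Real.pi, (1 + r * Real.cos θ) ^ p * Real.sin θ ^ n

/-- The derivative of `F p n` with respect to `r`, before any integration by parts. -/
noncomputable def DF (p : ℝ) (n : ℕ) (r : ℝ) : ℝ :=
  ∫ θ in (0:ℝ)..Real.pi, p * (1 + r * Real.cos θ) ^ (p - 1) * Real.cos θ * Real.sin θ ^ n

lemma base_pos {r : ℝ} (hr : |r| < 1) (θ : ℝ) : 0 < 1 + r * Real.cos θ := by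
  have h1 : |r * Real.cos θ| < 1 := by
    rw [abs_mul]
    calc |r| * |Real.cos θ| ≤ |r| * 1 :=
          mul_le_mul_of_nonneg_left (Real.abs_cos_le_one θ) (abs_nonneg r)
      _ < 1 := by linarith
  linarith [(abs_lt.mp h1).1]

lemma continuous_base_rpow {r : ℝ} (hr : |r| < 1) (p : ℝ) :
    Continuous fun θ : ℝ => (1 + r * Real.cos θ) ^ p :=
  (by fun_prop : Continuous fun θ : ℝ => 1 + r * Real.cos θ).rpow_const
    fun θ => Or.inl (base_pos hr θ).ne'

lemma continuous_F_integrand {r : ℝ} (hr : |r| < 1) (p : ℝ) (n : ℕ) :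
    Continuous fun θ : ℝ => (1 + r * Real.cos θ) ^ p * Real.sin θ ^ n :=
  (continuous_base_rpow hr p).mul (by fun_prop)

lemma continuous_DF_integrand {r : ℝ} (hr : |r| < 1) (p : ℝ) (n : ℕ) :
    Continuous fun θ : ℝ =>
      p * (1 + r * Real.cos θ) ^ (p - 1) * Real.cos θ * Real.sin θ ^ n := by
  have := continuous_base_rpow hr (p - 1)
  fun_prop

lemma hasDerivAt_F (p : ℝ) (n : ℕ) {r : ℝ} (hr : |r| < 1) :
    HasDerivAt (F p n) (DF p n r) r := by
  obtain ⟨ρ, hρ, hρ1⟩ := exists_between hr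
  have hsub : ∀ x ∈ Icc (-ρ) ρ, |x| < 1 := fun x hx => (abs_le.mpr hx).trans_lt hρ1
  have hs : Icc (-ρ) ρ ∈ nhds r := Icc_mem_nhds (abs_lt.mp hρ).1 (abs_lt.mp hρ).2
  -- the integrand of the derivative is bounded on a compact box around `{r} × [0, π]`
  obtain ⟨C, hC⟩ := (isCompact_Icc (a := -ρ) (b := ρ)).prod
      (isCompact_Icc (a := (0:ℝ)) (b := Real.pi)) |>.exists_bound_of_continuousOn
      (f := fun z : ℝ × ℝ =>
        p * (1 + z.1 * Real.cos z.2) ^ (p - 1) * Real.cos z.2 * Real.sin z.2 ^ n) (by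
    have h1 : ContinuousOn (fun z : ℝ × ℝ => (1 + z.1 * Real.cos z.2) ^ (p - 1))
        (Icc (-ρ) ρ ×ˢ Icc (0:ℝ) Real.pi) :=
      (by fun_prop : Continuous fun z : ℝ × ℝ => 1 + z.1 * Real.cos z.2).continuousOn.rpow_const
        fun z hz => Or.inl (base_pos (hsub z.1 hz.1) z.2).ne'
    fun_prop)
  refine (intervalIntegral.hasDerivAt_integral_of_dominated_loc_of_deriv_le
    (F := fun r θ => (1 + r * Real.cos θ) ^ p * Real.sin θ ^ n)
    (F' := fun r θ => p * (1 + r * Real.cos θ) ^ (p - 1) * Real.cos θ * Real.sin θ ^ n)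
    (bound := fun _ => C) hs ?_ ?_ ?_ ?_ ?_ ?_).2
  · filter_upwards [hs] with x hx
    exact (continuous_F_integrand (hsub x hx) p n).aestronglyMeasurable
  · exact (continuous_F_integrand hr p n).intervalIntegrable _ _
  · exact (continuous_DF_integrand hr p n).aestronglyMeasurable
  · refine Filter.Eventually.of_forall fun θ hθ x hx => ?_
    rw [uIoc_of_le Real.pi_pos.le] at hθ
    exact hC (x, θ) ⟨hx, hθ.1.le, hθ.2⟩
  · simp
  · refine Filter.Eventually.of_forall fun θ _ x hx => ?_
    have h1 : HasDerivAt (fun x : ℝ => 1 + x * Real.cos θ) (Real.cos θ) x := by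
      simpa using ((hasDerivAt_id x).mul_const (Real.cos θ)).const_add 1
    have h2 := (h1.rpow_const (p := p)
      (Or.inl (base_pos (hsub x hx) θ).ne')).mul_const (Real.sin θ ^ n)
    refine h2.congr_deriv ?_
    ring

/-- Since `r cos θ = (1 + r cos θ) - 1`, the operator `r d/dr` relates neighbouring exponents. -/
lemma r_mul_DF (p : ℝ) (n : ℕ) {r : ℝ} (hr : |r| < 1) :
    r * DF p n r = p * (F p n r - F (p - 1) n r) := by
  unfold DF F
  rw [← intervalIntegral.integral_sub
      ((continuous_F_integrand hr p n).intervalIntegrable _ _)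
      ((continuous_F_integrand hr (p - 1) n).intervalIntegrable _ _),
    ← intervalIntegral.integral_const_mul, ← intervalIntegral.integral_const_mul]
  refine intervalIntegral.integral_congr fun θ _ => ?_
  have hu := base_pos hr θ
  have : (1 + r * Real.cos θ) ^ p = (1 + r * Real.cos θ) ^ (p - 1) * (1 + r * Real.cos θ) := by
    rw [Real.rpow_sub_one hu.ne']; field_simp
  simp only [this]
  ring

/-- Integration by parts against `sinⁿ⁺¹ θ / (n + 1)`. -/
lemma DF_eq (p : ℝ) (n : ℕ) {r : ℝ} (hr : |r| < 1) :
    DF p n r = p * (p - 1) / (n + 1) * r * F (p - 2) (n + 2) r := by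
  have hn : (n:ℝ) + 1 ≠ 0 := by positivity
  have key := intervalIntegral.integral_mul_deriv_eq_deriv_mul (a := 0) (b := Real.pi)
    (u := fun θ => p * (1 + r * Real.cos θ) ^ (p - 1))
    (u' := fun θ => p * ((-(r * Real.sin θ)) * (p - 1) * (1 + r * Real.cos θ) ^ (p - 2)))
    (v := fun θ => Real.sin θ ^ (n + 1) / (n + 1))
    (v' := fun θ => Real.sin θ ^ n * Real.cos θ) ?_ ?_ ?_ ?_
  · have h1 : DF p n r = ∫ θ in (0:ℝ)..Real.pi,
        p * (1 + r * Real.cos θ) ^ (p - 1) * (Real.sin θ ^ n * Real.cos θ) := by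
      unfold DF
      exact intervalIntegral.integral_congr fun θ _ => by ring
    rw [h1, key]
    unfold F
    simp only [Real.sin_pi, Real.sin_zero, ne_eq, Nat.succ_ne_zero, not_false_eq_true, zero_pow,
      zero_div, mul_zero, sub_zero, zero_sub]
    rw [← intervalIntegral.integral_neg, ← intervalIntegral.integral_const_mul]
    refine intervalIntegral.integral_congr fun θ _ => ?_
    field_simp
    ring
  · intro θ _
    have h1 : HasDerivAt (fun θ : ℝ => 1 + r * Real.cos θ) (-(r * Real.sin θ)) θ := by
      simpa using ((Real.hasDerivAt_cos θ).const_mul r).const_add 1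
    have h2 := (h1.rpow_const (p := p - 1) (Or.inl (base_pos hr θ).ne')).const_mul p
    refine h2.congr_deriv ?_
    rw [show p - 1 - 1 = p - 2 by ring]
  · intro θ _
    have h1 := ((Real.hasDerivAt_sin θ).pow (n + 1)).div_const ((n:ℝ) + 1)
    refine h1.congr_deriv ?_
    push_cast
    field_simp
  · have := continuous_base_rpow hr (p - 2)
    exact Continuous.intervalIntegrable (by fun_prop) _ _
  · exact Continuous.intervalIntegrable (by fun_prop) _ _

/-- The relation `r² sin² θ = (r² - 1) + 2u - u²` with `u = 1 + r cos θ`, integrated. -/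
lemma sq_mul_F (p : ℝ) (n : ℕ) {r : ℝ} (hr : |r| < 1) :
    r ^ 2 * F (p - 2) (n + 2) r =
      (r ^ 2 - 1) * F (p - 2) n r + 2 * F (p - 1) n r - F p n r := by
  unfold F
  have i0 := (continuous_F_integrand hr p n).intervalIntegrable (μ := MeasureTheory.volume) 0 Real.pi
  have i1 := ((continuous_F_integrand hr (p - 1) n).const_mul 2).intervalIntegrable
    (μ := MeasureTheory.volume) 0 Real.pi
  have i2 := ((continuous_F_integrand hr (p - 2) n).const_mul (r ^ 2 - 1)).intervalIntegrable
    (μ := MeasureTheory.volume) 0 Real.pi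
  rw [← intervalIntegral.integral_const_mul, ← intervalIntegral.integral_const_mul,
    ← intervalIntegral.integral_const_mul, ← intervalIntegral.integral_add i2 i1,
    ← intervalIntegral.integral_sub (i2.add i1) i0]
  refine intervalIntegral.integral_congr fun θ _ => ?_
  have hu := base_pos hr θ
  have e1 : (1 + r * Real.cos θ) ^ (p - 1) =
      (1 + r * Real.cos θ) ^ (p - 2) * (1 + r * Real.cos θ) := by
    rw [← Real.rpow_add_one hu.ne']; congr 1; ring
  have e0 : (1 + r * Real.cos θ) ^ p =
      (1 + r * Real.cos θ) ^ (p - 2) * (1 + r * Real.cos θ) ^ 2 := by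
    rw [← Real.rpow_add_natCast hu.ne']; congr 1; push_cast; ring
  simp only [e1, e0, pow_add, Real.sin_sq]
  ring

lemma F_pos (p : ℝ) (n : ℕ) {r : ℝ} (hr : |r| < 1) : 0 < F p n r := by
  refine intervalIntegral.intervalIntegral_pos_of_pos_on
    ((continuous_F_integrand hr p n).intervalIntegrable _ _) (fun θ hθ => ?_) Real.pi_pos
  exact mul_pos (Real.rpow_pos_of_pos (base_pos hr θ) p)
    (pow_pos (Real.sin_pos_of_pos_of_lt_pi hθ.1 hθ.2) n)

/-- `F p n` as a function of the energy, through `r = √(1 + 4h)`. -/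
noncomputable def G (p : ℝ) (n : ℕ) (h : ℝ) : ℝ := F p n (Real.sqrt (1 + 4 * h))

lemma abs_sqrt_lt {h : ℝ} (h0 : h < 0) : |Real.sqrt (1 + 4 * h)| < 1 := by
  rw [abs_of_nonneg (Real.sqrt_nonneg _), Real.sqrt_lt' one_pos]
  linarith

lemma G_pos (p : ℝ) (n : ℕ) {h : ℝ} (h0 : h < 0) : 0 < G p n h := F_pos p n (abs_sqrt_lt h0)

lemma hasDerivAt_G (p : ℝ) (n : ℕ) {h : ℝ} (hh : h ∈ Ioo (-(1:ℝ)/4) 0) :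
    HasDerivAt (G p n) (2 * p * (p - 1) / (n + 1) * G (p - 2) (n + 2) h) h := by
  have hs : 0 < 1 + 4 * h := by linarith [hh.1]
  have h1 : HasDerivAt (fun h : ℝ => 1 + 4 * h) 4 h := by
    simpa using ((hasDerivAt_id h).const_mul 4).const_add 1
  have h2 := (hasDerivAt_F p n (abs_sqrt_lt hh.2)).comp h (h1.sqrt hs.ne')
  refine h2.congr_deriv ?_
  rw [DF_eq p n (abs_sqrt_lt hh.2)]
  have := Real.sqrt_pos.mpr hs
  unfold G
  field_simp
  ring

/-- At `h = -1/4` the square root is not differentiable, but continuity suffices there. -/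
lemma continuousAt_G (p : ℝ) (n : ℕ) : ContinuousAt (G p n) (-(1:ℝ)/4) := by
  have h1 : ContinuousAt (fun h : ℝ => Real.sqrt (1 + 4 * h)) (-(1:ℝ)/4) := by fun_prop
  exact ContinuousAt.comp (f := fun h : ℝ => Real.sqrt (1 + 4 * h))
    (hasDerivAt_F p n (abs_sqrt_lt (by norm_num))).continuousAt h1

lemma G_start (p : ℝ) (n : ℕ) : G p n (-(1:ℝ)/4) = ∫ θ in (0:ℝ)..Real.pi, Real.sin θ ^ n := by
  unfold G F
  norm_num

/-- Two expressions for `(1 + 4h) / 2` times the derivative of `G p n`. -/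
lemma s_mul_G (p : ℝ) (n : ℕ) {h : ℝ} (hh : h ∈ Ioo (-(1:ℝ)/4) 0) :
    (1 + 4 * h) * (p * (p - 1) / (n + 1) * G (p - 2) (n + 2) h) =
      p * (G p n h - G (p - 1) n h) := by
  have hr := abs_sqrt_lt hh.2
  have hs : 0 ≤ 1 + 4 * h := by linarith [hh.1]
  have h1 := r_mul_DF p n hr
  rw [DF_eq p n hr] at h1
  unfold G
  rw [← h1]
  nth_rewrite 1 [← Real.sq_sqrt hs]
  ring

/-- `sq_mul_F` in terms of the energy. -/
lemma s_mul_G' (p : ℝ) (n : ℕ) {h : ℝ} (hh : h ∈ Ioo (-(1:ℝ)/4) 0) :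
    (1 + 4 * h) * G (p - 2) (n + 2) h =
      4 * h * G (p - 2) n h + 2 * G (p - 1) n h - G p n h := by
  have h1 := sq_mul_F p n (abs_sqrt_lt hh.2)
  rw [Real.sq_sqrt (by linarith [hh.1])] at h1
  unfold G
  linarith

/-! ### The Abelian integrals as trigonometric integrals -/

/-- The substitution `x = √(1 + r cos θ)` with `r = √(1 + 4h)`. -/
lemma AbI_eq (k : ℕ) {h : ℝ} (hh : h ∈ Ioo (-(1:ℝ)/4) 0) :
    AbI k h = (1 + 4 * h) / Real.sqrt 2 * ∫ θ in (0:ℝ)..Real.pi,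
      Real.sqrt (1 + Real.sqrt (1 + 4 * h) * Real.cos θ) ^ k /
        Real.sqrt (1 + Real.sqrt (1 + 4 * h) * Real.cos θ) * Real.sin θ ^ 2 := by
  have hs : 0 < 1 + 4 * h := by linarith [hh.1]
  have hr := abs_sqrt_lt hh.2
  have hr2 := Real.sq_sqrt hs.le
  have hr0 := Real.sqrt_nonneg (1 + 4 * h)
  set r := Real.sqrt (1 + 4 * h) with hrdef
  have key := intervalIntegral.integral_comp_mul_deriv (a := 0) (b := Real.pi)
    (f := fun θ => Real.sqrt (1 + r * Real.cos θ))
    (f' := fun θ => -(r * Real.sin θ) / (2 * Real.sqrt (1 + r * Real.cos θ)))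
    (g := fun x => x ^ k * Real.sqrt (2 * h + x ^ 2 - x ^ 4 / 2)) ?_ ?_ (by fun_prop)
  · have e0 : Real.sqrt (1 + r * Real.cos 0) = xplus h := by simp [xplus, ← hrdef]
    have e1 : Real.sqrt (1 + r * Real.cos Real.pi) = xminus h := by
      simp [xminus, ← hrdef, sub_eq_add_neg]
    simp only [e0, e1] at key
    unfold AbI
    rw [intervalIntegral.integral_symm, ← key, ← intervalIntegral.integral_neg,
      ← intervalIntegral.integral_const_mul, ← intervalIntegral.integral_const_mul]
    refine intervalIntegral.integral_congr fun θ hθ => ?_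
    rw [uIcc_of_le Real.pi_pos.le] at hθ
    have hsin := Real.sin_nonneg_of_mem_Icc hθ
    have hu := base_pos hr θ
    have hsq := Real.sq_sqrt hu.le
    have hsp := Real.sqrt_pos.mpr hu
    have e2 : Real.sqrt (2 * h + Real.sqrt (1 + r * Real.cos θ) ^ 2
        - Real.sqrt (1 + r * Real.cos θ) ^ 4 / 2) = r * Real.sin θ / Real.sqrt 2 := by
      rw [show Real.sqrt (1 + r * Real.cos θ) ^ 4 = (Real.sqrt (1 + r * Real.cos θ) ^ 2) ^ 2 by ring,
        hsq, show 2 * h + (1 + r * Real.cos θ) - (1 + r * Real.cos θ) ^ 2 / 2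
          = (r * Real.sin θ) ^ 2 / 2 by
            rw [mul_pow, Real.sin_sq]; linear_combination (-(1:ℝ)/2) * hr2,
        Real.sqrt_div (sq_nonneg _), Real.sqrt_sq (mul_nonneg hr0 hsin)]
    simp only [Function.comp, e2]
    rw [← hr2]
    field_simp
  · intro θ _
    have h1 : HasDerivAt (fun θ : ℝ => 1 + r * Real.cos θ) (-(r * Real.sin θ)) θ := by
      simpa using ((Real.hasDerivAt_cos θ).const_mul r).const_add 1
    exact h1.sqrt (base_pos hr θ).ne'
  · refine Continuous.continuousOn (Continuous.div (by fun_prop) (by fun_prop) fun θ => ?_)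
    exact (mul_pos two_pos (Real.sqrt_pos.mpr (base_pos hr θ))).ne'

lemma AbI_one {h : ℝ} (hh : h ∈ Ioo (-(1:ℝ)/4) 0) :
    AbI 1 h = (1 + 4 * h) / Real.sqrt 2 * (Real.pi / 2) := by
  rw [AbI_eq 1 hh]
  congr 1
  have : ∫ θ in (0:ℝ)..Real.pi, Real.sin θ ^ 2 = Real.pi / 2 := by simp
  rw [← this]
  refine intervalIntegral.integral_congr fun θ _ => ?_
  have := Real.sqrt_pos.mpr (base_pos (abs_sqrt_lt hh.2) θ)
  field_simp

lemma J0_eq {h : ℝ} (hh : h ∈ Ioo (-(1:ℝ)/4) 0) : J0 h = 2 / Real.pi * G (-1/2) 2 h := by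
  have hs : 0 < 1 + 4 * h := by linarith [hh.1]
  have e : AbI 0 h = (1 + 4 * h) / Real.sqrt 2 * G (-1/2) 2 h := by
    rw [AbI_eq 0 hh]
    congr 1
    refine intervalIntegral.integral_congr fun θ _ => ?_
    have hu := base_pos (abs_sqrt_lt hh.2) θ
    rw [show (-1/2 : ℝ) = -(1/2) by norm_num, Real.rpow_neg hu.le, ← Real.sqrt_eq_rpow]
    simp
  have := Real.pi_pos
  rw [J0, e, AbI_one hh]
  field_simp

lemma J2_eq {h : ℝ} (hh : h ∈ Ioo (-(1:ℝ)/4) 0) : J2 h = 2 / Real.pi * G (1/2) 2 h := by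
  have hs : 0 < 1 + 4 * h := by linarith [hh.1]
  have e : AbI 2 h = (1 + 4 * h) / Real.sqrt 2 * G (1/2) 2 h := by
    rw [AbI_eq 2 hh]
    congr 1
    refine intervalIntegral.integral_congr fun θ _ => ?_
    have := Real.sqrt_pos.mpr (base_pos (abs_sqrt_lt hh.2) θ)
    rw [← Real.sqrt_eq_rpow]
    field_simp
  have := Real.pi_pos
  rw [J2, e, AbI_one hh]
  field_simp

/-- Two applications of `hasDerivAt_G`. -/
lemma iteratedDeriv_two_of_eq_G {J : ℝ → ℝ} {c p : ℝ} {n : ℕ}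
    (hJ : ∀ h ∈ Ioo (-(1:ℝ)/4) 0, J h = c * G p n h) {h : ℝ} (hh : h ∈ Ioo (-(1:ℝ)/4) 0) :
    iteratedDeriv 2 J h = c * (2 * p * (p - 1) / (n + 1) *
      (2 * (p - 2) * (p - 2 - 1) / ((n + 2 : ℕ) + 1) * G (p - 2 - 2) (n + 2 + 2) h)) := by
  have h1 : ∀ x ∈ Ioo (-(1:ℝ)/4) 0,
      deriv J x = c * (2 * p * (p - 1) / (n + 1) * G (p - 2) (n + 2) x) := by
    intro x hx
    have he : J =ᶠ[nhds x] fun x => c * G p n x :=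
      Filter.eventuallyEq_of_mem (isOpen_Ioo.mem_nhds hx) hJ
    rw [he.deriv_eq, ((hasDerivAt_G p n hx).const_mul c).deriv]
  have he : deriv J =ᶠ[nhds h] fun x => c * (2 * p * (p - 1) / (n + 1) * G (p - 2) (n + 2) x) :=
    Filter.eventuallyEq_of_mem (isOpen_Ioo.mem_nhds hh) h1
  rw [iteratedDeriv_succ, iteratedDeriv_one, he.deriv_eq,
    (((hasDerivAt_G (p - 2) (n + 2) hh).const_mul _).const_mul c).deriv]

lemma J0_second {h : ℝ} (hh : h ∈ Ioo (-(1:ℝ)/4) 0) :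
    iteratedDeriv 2 J0 h = 7 / (2 * Real.pi) * G (-9/2) 6 h := by
  rw [iteratedDeriv_two_of_eq_G (fun h => J0_eq) hh]
  have := Real.pi_pos
  norm_num
  field_simp

lemma J2_second {h : ℝ} (hh : h ∈ Ioo (-(1:ℝ)/4) 0) :
    iteratedDeriv 2 J2 h = -1 / (2 * Real.pi) * G (-7/2) 6 h := by
  rw [iteratedDeriv_two_of_eq_G (fun h => J2_eq) hh]
  have := Real.pi_pos
  norm_num
  field_simp
  ring

/-! ### The ratio and its Riccati equation -/

/-- The closed form of `wRatio` as a quotient of two positive integrals. -/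
noncomputable def W (h : ℝ) : ℝ := -G (-7/2) 6 h / (7 * G (-9/2) 6 h)

lemma wRatio_eq {h : ℝ} (hh : h ∈ Ioo (-(1:ℝ)/4) 0) : wRatio h = W h := by
  have := Real.pi_pos
  have := G_pos (-9/2) 6 hh.2
  rw [wRatio, J0_second hh, J2_second hh, W]
  field_simp

/-- The derivative of `W`. -/
noncomputable def W1 (h : ℝ) : ℝ :=
  -(9/2 * G (-11/2) 8 h * G (-9/2) 6 h - G (-7/2) 6 h * (99/14 * G (-13/2) 8 h)) /
    (7 * G (-9/2) 6 h ^ 2)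

/-- The second derivative of `W`. -/
noncomputable def W2 (h : ℝ) : ℝ :=
  -((143/4 * G (-15/2) 10 h * G (-9/2) 6 h - G (-7/2) 6 h * (2145/28 * G (-17/2) 10 h))
      * G (-9/2) 6 h
    - 2 * (99/14 * G (-13/2) 8 h) *
      (9/2 * G (-11/2) 8 h * G (-9/2) 6 h - G (-7/2) 6 h * (99/14 * G (-13/2) 8 h))) /
    (7 * G (-9/2) 6 h ^ 3)

lemma W_neg {h : ℝ} (h0 : h < 0) : W h < 0 :=
  div_neg_of_neg_of_pos (neg_neg_of_pos (G_pos _ _ h0)) (mul_pos (by norm_num) (G_pos _ _ h0))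

lemma hasDerivAt_A {h : ℝ} (hh : h ∈ Ioo (-(1:ℝ)/4) 0) :
    HasDerivAt (G (-9/2) 6) (99/14 * G (-13/2) 8 h) h :=
  (hasDerivAt_G (-9/2) 6 hh).congr_deriv (by norm_num)

lemma hasDerivAt_B {h : ℝ} (hh : h ∈ Ioo (-(1:ℝ)/4) 0) :
    HasDerivAt (G (-7/2) 6) (9/2 * G (-11/2) 8 h) h :=
  (hasDerivAt_G (-7/2) 6 hh).congr_deriv (by norm_num)

lemma hasDerivAt_A1 {h : ℝ} (hh : h ∈ Ioo (-(1:ℝ)/4) 0) :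
    HasDerivAt (fun h => 99/14 * G (-13/2) 8 h) (2145/28 * G (-17/2) 10 h) h :=
  ((hasDerivAt_G (-13/2) 8 hh).const_mul _).congr_deriv (by norm_num; ring)

lemma hasDerivAt_B1 {h : ℝ} (hh : h ∈ Ioo (-(1:ℝ)/4) 0) :
    HasDerivAt (fun h => 9/2 * G (-11/2) 8 h) (143/4 * G (-15/2) 10 h) h :=
  ((hasDerivAt_G (-11/2) 8 hh).const_mul _).congr_deriv (by norm_num; ring)

lemma hasDerivAt_W {h : ℝ} (hh : h ∈ Ioo (-(1:ℝ)/4) 0) :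
    HasDerivAt W (W1 h) h := by
  have hA := G_pos (-9/2) 6 hh.2
  refine ((hasDerivAt_B hh).neg.div ((hasDerivAt_A hh).const_mul 7) (by positivity)).congr_deriv ?_
  simp only [W1, Pi.neg_apply]
  field_simp
  ring

lemma hasDerivAt_W1 {h : ℝ} (hh : h ∈ Ioo (-(1:ℝ)/4) 0) :
    HasDerivAt W1 (W2 h) h := by
  have hA := G_pos (-9/2) 6 hh.2
  have hN := (((hasDerivAt_B1 hh).mul (hasDerivAt_A hh)).sub
    ((hasDerivAt_B hh).mul (hasDerivAt_A1 hh))).neg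
  refine (hN.div (((hasDerivAt_A hh).pow 2).const_mul 7)
    (mul_pos (by norm_num) (pow_pos hA 2)).ne').congr_deriv ?_
  simp only [W2, Pi.neg_apply, Pi.sub_apply, Pi.mul_apply, Pi.pow_apply]
  generalize G (-9/2) 6 h = A at *
  field_simp
  ring

/-- The Riccati equation for `W`, from the three-term relations between the integrals. -/
lemma W_riccati {h : ℝ} (hh : h ∈ Ioo (-(1:ℝ)/4) 0) :
    h * (4 * h + 1) * W1 h = -(35/4) * W h ^ 2 + (2 * h + 1) * W h - h := by
  have hA := G_pos (-9/2) 6 hh.2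
  have r1 : (1 + 4 * h) * (9/4 * G (-11/2) 8 h) = -(7/2) * (G (-7/2) 6 h - G (-9/2) 6 h) := by
    convert s_mul_G (-7/2) 6 hh using 2 <;> norm_num
  have r2 : (1 + 4 * h) * (99/28 * G (-13/2) 8 h) =
      -(9/2) * (G (-9/2) 6 h - G (-11/2) 6 h) := by
    convert s_mul_G (-9/2) 6 hh using 2 <;> norm_num
  have r3 : (1 + 4 * h) * G (-11/2) 8 h =
      4 * h * G (-11/2) 6 h + 2 * G (-9/2) 6 h - G (-7/2) 6 h := by
    convert s_mul_G' (-7/2) 6 hh using 2 <;> norm_num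
  unfold W W1
  generalize G (-7/2) 6 h = B at *
  generalize G (-9/2) 6 h = A at *
  generalize G (-11/2) 8 h = B1 at *
  generalize G (-13/2) 8 h = A1 at *
  generalize G (-11/2) 6 h = E at *
  have e : h * (4 * h + 1) * -(9/2 * B1 * A - B * (99/14 * A1)) =
      -(5/4) * B ^ 2 - (2 * h + 1) * A * B - 7 * h * A ^ 2 := by
    linear_combination (-2 * h * A + B) * r1 + 2 * h * B * r2 - 9/4 * B * r3
  rw [mul_div_assoc', e]
  field_simp
  ring

/-- The Riccati equation differentiated once. -/
lemma W2_eq {h : ℝ} (hh : h ∈ Ioo (-(1:ℝ)/4) 0) :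
    h * (4 * h + 1) * W2 h = (-(35/2) * W h - 6 * h) * W1 h + 2 * W h - 1 := by
  have hW := hasDerivAt_W hh
  have hid := hasDerivAt_id h
  have hL := (hid.mul ((hid.const_mul 4).add_const 1)).mul (hasDerivAt_W1 hh)
  have hR := (((hW.pow 2).const_mul (-(35/4))).add
    (((hid.const_mul 2).add_const 1).mul hW)).sub hid
  have he : (fun x => -(35/4) * W x ^ 2 + (2 * x + 1) * W x - x) =ᶠ[nhds h]
      fun x => x * (4 * x + 1) * W1 x :=
    Filter.eventuallyEq_of_mem (isOpen_Ioo.mem_nhds hh) fun x hx => (W_riccati hx).symm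
  have := hL.unique (hR.congr_of_eventuallyEq he.symm)
  simp at this
  linarith

/-! ### Monotonicity and convexity -/

/-- A function with a positive limit at `-1/4` whose derivative is positive at each of its zeros
stays positive. -/
lemma pos_of_deriv_pos_at_zeros {f f' : ℝ → ℝ} {c : ℝ} (hc : 0 < c)
    (hlim : Filter.Tendsto f (nhdsWithin (-(1:ℝ)/4) (Ioo (-(1:ℝ)/4) 0)) (nhds c))
    (hd : ∀ x ∈ Ioo (-(1:ℝ)/4) 0, HasDerivAt f (f' x) x)
    (hz : ∀ x ∈ Ioo (-(1:ℝ)/4) 0, f x = 0 → 0 < f' x) :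
    ∀ x ∈ Ioo (-(1:ℝ)/4) 0, 0 < f x := by
  have hlim' : Filter.Tendsto f (nhdsWithin (-(1:ℝ)/4) (Ioi (-(1:ℝ)/4))) (nhds c) := by
    rwa [nhdsWithin_Ioo_eq_nhdsGT (by norm_num)] at hlim
  have hnonneg : ∀ x ∈ Ioo (-(1:ℝ)/4) 0, 0 ≤ f x := by
    intro x hx
    obtain ⟨a, hfa, ha⟩ := ((hlim'.eventually (lt_mem_nhds hc)).and
      (Ioo_mem_nhdsGT hx.1)).exists
    have hsub : ∀ y ∈ Icc a x, y ∈ Ioo (-(1:ℝ)/4) 0 := fun y hy =>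
      ⟨ha.1.trans_le hy.1, hy.2.trans_lt hx.2⟩
    refine image_le_of_deriv_right_lt_deriv_boundary' (f := fun _ => 0) (f' := fun _ => 0)
      (B := f) (B' := f') continuousOn_const (fun _ _ => hasDerivWithinAt_const _ _ _) hfa.le
      (fun y hy => (hd y (hsub y hy)).continuousAt.continuousWithinAt)
      (fun y hy => (hd y (hsub y (Ico_subset_Icc_self hy))).hasDerivWithinAt)
      (fun y hy h0 => hz y (hsub y (Ico_subset_Icc_self hy)) h0.symm)
      (right_mem_Icc.mpr ha.2.le)
  intro x hx
  refine (hnonneg x hx).lt_of_ne fun h0 => ?_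
  -- an interior zero would be a local minimum, so the derivative would vanish there
  have hmin : IsLocalMin f x := by
    filter_upwards [isOpen_Ioo.mem_nhds hx] with y hy
    rw [← h0]
    exact hnonneg y hy
  exact (hz x hx h0.symm).ne' (hmin.hasDerivAt_eq_zero (hd x hx))

/-- At `h = -1/4` each integral is `∫₀^π sinⁿ`, and these are related by Wallis' recursion. -/
lemma start_values :
    0 < G (-9/2) 6 (-(1:ℝ)/4) ∧ G (-7/2) 6 (-(1:ℝ)/4) = G (-9/2) 6 (-(1:ℝ)/4) ∧
    G (-11/2) 8 (-(1:ℝ)/4) = 7/8 * G (-9/2) 6 (-(1:ℝ)/4) ∧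
    G (-13/2) 8 (-(1:ℝ)/4) = 7/8 * G (-9/2) 6 (-(1:ℝ)/4) ∧
    G (-15/2) 10 (-(1:ℝ)/4) = 63/80 * G (-9/2) 6 (-(1:ℝ)/4) ∧
    G (-17/2) 10 (-(1:ℝ)/4) = 63/80 * G (-9/2) 6 (-(1:ℝ)/4) := by
  have h8 := integral_sin_pow (a := 0) (b := Real.pi) 6
  have h10 := integral_sin_pow (a := 0) (b := Real.pi) 8
  norm_num at h8 h10
  simp only [G_start, true_and]
  refine ⟨integral_sin_pow_pos 6, h8, h8, ?_, ?_⟩ <;> rw [h10, h8] <;> ring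

lemma tendsto_of_continuousAt {f : ℝ → ℝ} (hf : ContinuousAt f (-(1:ℝ)/4)) :
    Filter.Tendsto f (nhdsWithin (-(1:ℝ)/4) (Ioo (-(1:ℝ)/4) 0)) (nhds (f (-(1:ℝ)/4))) :=
  hf.tendsto.mono_left nhdsWithin_le_nhds

lemma continuousAt_W : ContinuousAt W (-(1:ℝ)/4) := by
  have h0 := start_values.1
  have hA := continuousAt_G (-9/2) 6
  have hB := continuousAt_G (-7/2) 6
  exact hB.neg.div (hA.const_mul 7) (by positivity)

lemma continuousAt_W1 : ContinuousAt W1 (-(1:ℝ)/4) := by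
  have h0 := start_values.1
  have hA := continuousAt_G (-9/2) 6
  have hB := continuousAt_G (-7/2) 6
  have hA1 := continuousAt_G (-13/2) 8
  have hB1 := continuousAt_G (-11/2) 8
  unfold W1
  exact ContinuousAt.div (by fun_prop) (by fun_prop) (by positivity)

lemma continuousAt_W2 : ContinuousAt W2 (-(1:ℝ)/4) := by
  have h0 := start_values.1
  have hA := continuousAt_G (-9/2) 6
  have hB := continuousAt_G (-7/2) 6
  have hA1 := continuousAt_G (-13/2) 8
  have hB1 := continuousAt_G (-11/2) 8
  have hA2 := continuousAt_G (-17/2) 10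
  have hB2 := continuousAt_G (-15/2) 10
  unfold W2
  exact ContinuousAt.div (by fun_prop) (by fun_prop) (by positivity)

lemma W_start : W (-(1:ℝ)/4) = -(1:ℝ)/7 := by
  obtain ⟨h0, hB, -⟩ := start_values
  rw [W, hB]
  generalize G (-9/2) 6 (-(1:ℝ)/4) = a at h0
  field_simp

lemma W1_start : 0 < W1 (-(1:ℝ)/4) := by
  obtain ⟨h0, hB, hB1, hA1, -⟩ := start_values
  have : W1 (-(1:ℝ)/4) = 9/28 := by
    rw [W1, hB, hB1, hA1]
    generalize G (-9/2) 6 (-(1:ℝ)/4) = a at h0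
    field_simp
    norm_num
  rw [this]
  norm_num

lemma W2_start : 0 < W2 (-(1:ℝ)/4) := by
  obtain ⟨h0, hB, hB1, hA1, hB2, hA2⟩ := start_values
  have : W2 (-(1:ℝ)/4) = 99/160 := by
    rw [W2, hB, hB1, hA1, hB2, hA2]
    generalize G (-9/2) 6 (-(1:ℝ)/4) = a at h0
    field_simp
    norm_num
  rw [this]
  norm_num

lemma W1_pos : ∀ h ∈ Ioo (-(1:ℝ)/4) 0, 0 < W1 h := by
  refine pos_of_deriv_pos_at_zeros W1_start (tendsto_of_continuousAt continuousAt_W1)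
    (fun h hh => hasDerivAt_W1 hh) fun h hh hz => ?_
  have h1 := W2_eq hh
  have h2 := W_neg hh.2
  have h3 : h * (4 * h + 1) < 0 := mul_neg_of_neg_of_pos hh.2 (by linarith [hh.1])
  rw [hz] at h1
  by_contra hcon
  nlinarith [mul_nonneg_of_nonpos_of_nonpos h3.le (not_lt.mp hcon)]

/-- The derivative of `W2`, read off from `W2_eq`. -/
noncomputable def W3 (h : ℝ) : ℝ :=
  (((-(35/2) * W1 h - 6) * W1 h + (-(35/2) * W h - 6 * h) * W2 h + 2 * W1 h)
      - (8 * h + 1) * W2 h) / (h * (4 * h + 1))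

lemma hasDerivAt_W2 {h : ℝ} (hh : h ∈ Ioo (-(1:ℝ)/4) 0) : HasDerivAt W2 (W3 h) h := by
  have hne : ∀ x ∈ Ioo (-(1:ℝ)/4) 0, x * (4 * x + 1) ≠ 0 := fun x hx =>
    (mul_neg_of_neg_of_pos hx.2 (by linarith [hx.1])).ne
  have hW := hasDerivAt_W hh
  have hid := hasDerivAt_id' h
  have hN := (((((hW.const_mul (-(35/2))).sub (hid.const_mul 6)).mul (hasDerivAt_W1 hh)).add
    (hW.const_mul 2)).sub_const 1)
  have hD := hid.mul ((hid.const_mul 4).add_const 1)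
  have he : W2 =ᶠ[nhds h] fun x =>
      ((-(35/2) * W x - 6 * x) * W1 x + 2 * W x - 1) / (x * (4 * x + 1)) := by
    refine Filter.eventuallyEq_of_mem (isOpen_Ioo.mem_nhds hh) fun x hx => ?_
    have := hne x hx
    rw [eq_div_iff this, ← W2_eq hx]
    ring
  refine ((hN.div hD (hne h hh)).congr_of_eventuallyEq he).congr_deriv ?_
  have h1 := W2_eq hh
  have h2 := hne h hh
  simp only [W3, Pi.sub_apply, Pi.mul_apply, Pi.add_apply]
  rw [div_eq_div_iff (pow_ne_zero 2 h2) h2]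
  linear_combination (8 * h + 1) * (h * (4 * h + 1)) * h1

lemma W2_pos : ∀ h ∈ Ioo (-(1:ℝ)/4) 0, 0 < W2 h := by
  refine pos_of_deriv_pos_at_zeros W2_start (tendsto_of_continuousAt continuousAt_W2)
    (fun h hh => hasDerivAt_W2 hh) fun h hh hz => ?_
  have h1 := W1_pos h hh
  have h3 : h * (4 * h + 1) < 0 := mul_neg_of_neg_of_pos hh.2 (by linarith [hh.1])
  rw [W3, hz]
  refine div_pos_of_neg_of_neg ?_ h3
  nlinarith [sq_nonneg (W1 h)]

/-- `J₀'' ≠ 0` on `(−1/4,0)`, and `w = J₂''/J₀''` satisfies the Riccati equation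
`h(4h+1)w' = −(35/4)w² + (2h+1)w − h`, tends to `−1/7` at `−1/4⁺`, and is strictly
increasing and strictly convex on `(−1/4,0)`. -/
theorem w_riccati :
    (∀ h ∈ Set.Ioo (-(1:ℝ)/4) 0,
      iteratedDeriv 2 J0 h ≠ 0 ∧
      h * (4*h+1) * deriv wRatio h = -(35/4) * (wRatio h)^2 + (2*h+1) * wRatio h - h ∧
      0 < deriv wRatio h ∧ 0 < deriv (deriv wRatio) h) ∧
    Filter.Tendsto wRatio (nhdsWithin (-(1:ℝ)/4) (Set.Ioo (-(1:ℝ)/4) 0))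
      (nhds (-(1:ℝ)/7)) := by
  have hW : ∀ h ∈ Ioo (-(1:ℝ)/4) 0, wRatio =ᶠ[nhds h] W := fun h hh =>
    Filter.eventuallyEq_of_mem (isOpen_Ioo.mem_nhds hh) fun x => wRatio_eq
  have hd : ∀ h ∈ Ioo (-(1:ℝ)/4) 0, deriv wRatio h = W1 h := fun h hh => by
    rw [(hW h hh).deriv_eq, (hasDerivAt_W hh).deriv]
  refine ⟨fun h hh => ⟨?_, ?_, ?_, ?_⟩, ?_⟩
  · rw [J0_second hh]
    have := Real.pi_pos
    have := G_pos (-9/2) 6 hh.2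
    positivity
  · rw [hd h hh, wRatio_eq hh]
    exact W_riccati hh
  · rw [hd h hh]
    exact W1_pos h hh
  · have he : deriv wRatio =ᶠ[nhds h] W1 :=
      Filter.eventuallyEq_of_mem (isOpen_Ioo.mem_nhds hh) hd
    rw [he.deriv_eq, (hasDerivAt_W1 hh).deriv]
    exact W2_pos h hh
  · have h1 := tendsto_of_continuousAt continuousAt_W
    rw [W_start] at h1
    refine h1.congr' ?_
    filter_upwards [self_mem_nhdsWithin] with h hh
    exact (wRatio_eq hh).symm
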